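/- arXiv:2407.13563 — 2 statements merged into one kernel-verified Lean document; each statement's English description precedes it below -/
import Mathlib

section
/- Let p, m be natural numbers and let A ∈ ℂ^{p×p}, B, C ∈ ℂ^{p×m}, D ∈ ℂ^{m×m} be constant matrices such that det(z·A − A^H) ≠ 0 in ℂ(z). Define H := (z·D − D^H) + (z·B^H − C^H)·(z·A − A^H)⁻¹·(z·C − B) ∈ ℂ(z)^{m×m} (the transfer function of the *-anti-palindromic linear system matrix L(z) = z·[[−A, C],[B^H, D]] − [[−A^H, B],[C^H, D^H]]). Then z·H^*(z⁻¹) = −H, i.e. for all i, j, multiplying by z the substitution of z⁻¹ into conj(H_{ji}) yields −H_{ij}. -/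
open Polynomial Matrix

set_option synthInstance.maxHeartbeats 1000000
set_option maxHeartbeats 1000000

noncomputable section

/-- Coefficientwise complex conjugation on rational functions. -/
def conjRF : RatFunc ℂ →+* RatFunc ℂ :=
  RatFunc.mapRingHom (Polynomial.mapRingHom (starRingEnd ℂ))
    (by
      intro x hx
      simp only [Submonoid.mem_comap, mem_nonZeroDivisors_iff_ne_zero] at *
      intro h
      exact hx (Polynomial.map_injective _ (starRingEnd ℂ).injective (by simpa using h)))

/-- Substitution of `g` for the variable in `f`. -/
def subst (g f : RatFunc ℂ) : RatFunc ℂ := RatFunc.eval (algebraMap ℂ (RatFunc ℂ)) g f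

/-- Constant complex matrices regarded as matrices over `ℂ(z)`. -/
def toRF {n o : Type*} (A : Matrix n o ℂ) : Matrix n o (RatFunc ℂ) :=
  A.map (algebraMap ℂ (RatFunc ℂ))

/-- The para-conjugate `R^*(1/z)`. -/
def paraConj {n : Type*} (R : Matrix n n (RatFunc ℂ)) : Matrix n n (RatFunc ℂ) :=
  fun i j => subst (RatFunc.X)⁻¹ (conjRF (R j i))

def IsParaHermitian {n : Type*} (R : Matrix n n (RatFunc ℂ)) : Prop := paraConj R = R

def IsParaSkewHermitian {n : Type*} (R : Matrix n n (RatFunc ℂ)) : Prop := paraConj R = -R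

/-- The variable `z` of `ℂ(z)`. -/
def zz : RatFunc ℂ := RatFunc.X

theorem zz_ne_zero : zz ≠ 0 := RatFunc.X_ne_zero

theorem eval_inv_ne_zero (q : Polynomial ℂ) (hq : q ≠ 0) :
    Polynomial.eval₂ (algebraMap ℂ (RatFunc ℂ)) zz⁻¹ q ≠ 0 := by
  intro h
  have h1 : IsAlgebraic ℂ (zz⁻¹) := ⟨q, hq, h⟩
  have h2 : IsAlgebraic ℂ zz := IsAlgebraic.inv_iff.mp h1
  exact RatFunc.transcendental_X h2

/-- Substitution of the inverse of the variable, as a ring homomorphism. -/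
def substInvHom : RatFunc ℂ →+* RatFunc ℂ where
  toFun := subst zz⁻¹
  map_one' := RatFunc.eval_one _ _
  map_zero' := RatFunc.eval_zero _ _
  map_mul' x y := RatFunc.eval_mul _ _
    (eval_inv_ne_zero _ x.denom_ne_zero) (eval_inv_ne_zero _ y.denom_ne_zero)
  map_add' x y := RatFunc.eval_add _ _
    (eval_inv_ne_zero _ x.denom_ne_zero) (eval_inv_ne_zero _ y.denom_ne_zero)

/-- Para-conjugation of scalars. -/
def pc : RatFunc ℂ →+* RatFunc ℂ := substInvHom.comp conjRF

theorem conjRF_poly (q : Polynomial ℂ) : conjRF (algebraMap _ _ q) =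
    algebraMap _ (RatFunc ℂ) (q.map (starRingEnd ℂ)) := by
  have h := RatFunc.map_apply_div_ne_zero (K := ℂ) (R := ℂ) (Polynomial.mapRingHom (starRingEnd ℂ))
    (by
      intro x hx
      simp only [Submonoid.mem_comap, mem_nonZeroDivisors_iff_ne_zero] at *
      intro h
      exact hx (Polynomial.map_injective _ (starRingEnd ℂ).injective (by simpa using h)))
    q 1 one_ne_zero
  simp only [map_one, div_one] at h
  exact h

theorem pc_zz : pc zz = zz⁻¹ := by
  change subst zz⁻¹ (conjRF RatFunc.X) = _
  rw [← RatFunc.algebraMap_X, conjRF_poly]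
  simp [subst]

theorem pc_const (c : ℂ) : pc (algebraMap ℂ (RatFunc ℂ) c) =
    algebraMap ℂ (RatFunc ℂ) (star c) := by
  change subst zz⁻¹ (conjRF _) = _
  rw [IsScalarTower.algebraMap_apply ℂ (Polynomial ℂ) (RatFunc ℂ), conjRF_poly]
  simp [subst]

theorem pc_pencil {n o : Type*} (P : Matrix n o ℂ) (Q : Matrix o n ℂ) :
    ((zz • toRF P - toRF Qᴴ).map pc)ᵀ = (-zz⁻¹) • (zz • toRF Q - toRF Pᴴ) := by
  ext i j
  have := zz_ne_zero
  simp only [toRF, pc_zz, pc_const, Matrix.conjTranspose_apply, Matrix.transpose_apply,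
    Matrix.map_apply, Matrix.sub_apply, Matrix.smul_apply, smul_eq_mul, map_sub, map_mul,
    star_star]
  field_simp
  ring

/-- the transfer function `H` of a `*`-anti-palindromic linear system matrix
satisfies `z · H^*(1/z) = -H`. -/
theorem antipalindromic_transfer_rev_one (p m : ℕ)
    (A : Matrix (Fin p) (Fin p) ℂ) (B C : Matrix (Fin p) (Fin m) ℂ)
    (D : Matrix (Fin m) (Fin m) ℂ)
    (hdet : (zz • toRF A - toRF Aᴴ).det ≠ 0)
    (H : Matrix (Fin m) (Fin m) (RatFunc ℂ))
    (hH : H = (zz • toRF D - toRF Dᴴ) +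
      (zz • toRF Bᴴ - toRF Cᴴ) * (zz • toRF A - toRF Aᴴ)⁻¹ *
      (zz • toRF C - toRF B)) :
    ∀ i j, zz * subst zz⁻¹ (conjRF (H j i)) = -(H i j) := by
  have hz := zz_ne_zero
  set M := zz • toRF A - toRF Aᴴ with hM
  have hu : IsUnit M.det := hdet.isUnit
  have hMM : M * M⁻¹ = 1 := Matrix.mul_nonsing_inv _ hu
  have e1 : (M.map pc)ᵀ = (-zz⁻¹) • M := pc_pencil A A
  have e2 : ((zz • toRF D - toRF Dᴴ).map pc)ᵀ = _ := pc_pencil D D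
  have e3 : ((zz • toRF Bᴴ - toRF Cᴴ).map pc)ᵀ = (-zz⁻¹) • (zz • toRF C - toRF B) := by
    simpa using pc_pencil Bᴴ C
  have e4 : ((zz • toRF C - toRF B).map pc)ᵀ = (-zz⁻¹) • (zz • toRF Bᴴ - toRF Cᴴ) := by
    simpa using pc_pencil C Bᴴ
  have e5 : ((M⁻¹).map pc)ᵀ = (-zz) • M⁻¹ := by
    have h1 : ((M⁻¹).map pc)ᵀ * ((-zz⁻¹) • M) = 1 := by
      rw [← e1, ← Matrix.transpose_mul, ← Matrix.map_mul, hMM]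
      simp
    have h2 : ((-zz⁻¹) • M) * ((-zz) • M⁻¹) = 1 := by
      rw [Matrix.smul_mul, Matrix.mul_smul, smul_smul, hMM]
      simp [hz]
    exact left_inv_eq_right_inv h1 h2
  have key : zz • (H.map pc)ᵀ = -H := by
    rw [hH, Matrix.map_add _ (map_add pc), Matrix.map_mul, Matrix.map_mul, Matrix.transpose_add,
      Matrix.transpose_mul, Matrix.transpose_mul, e2, e3, e4, e5]
    simp only [Matrix.smul_mul, Matrix.mul_smul, smul_smul, smul_add, Matrix.mul_assoc, neg_add]
    congr 1
    · simp [hz]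
    · simp [hz]
  intro i j
  exact congrFun (congrFun key i) j
end
end

section
/- Let R ∈ ℂ(z)^{m×m} and define G ∈ ℂ(z)^{m×m} entrywise by G_{ij} := the substitution of (I − z)/(I + z) into R_{ij}, where I is the imaginary unit Complex.I. Then R is para-skew-Hermitian if and only if G is skew-Hermitian, i.e. G^* = −G (the coefficientwise-conjugate transpose of G equals −G). -/
open Polynomial Matrix

set_option synthInstance.maxHeartbeats 1000000
set_option maxHeartbeats 1000000

noncomputable section

/-- Coefficientwise-conjugate transpose of a matrix over `ℂ(z)`. -/
def conjT {a b : Type*} (R : Matrix a b (RatFunc ℂ)) : Matrix b a (RatFunc ℂ) :=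
  fun i j => conjRF (R j i)

/-- Entrywise substitution of `g` into a matrix over `ℂ(z)`. -/
def substMat {a b : Type*} (g : RatFunc ℂ) (R : Matrix a b (RatFunc ℂ)) :
    Matrix a b (RatFunc ℂ) :=
  fun i j => subst g (R i j)

lemma tr_of (g : RatFunc ℂ) (hg : ¬ ∃ c, g = RatFunc.C c) : Transcendental ℂ g := by
  exact RatFunc.transcendental_of_ne_C g hg

/-- Substitution as a ring homomorphism. -/
def substHom (g : RatFunc ℂ) (hg : Transcendental ℂ g) : RatFunc ℂ →+* RatFunc ℂ :=
  RatFunc.liftRingHom (Polynomial.eval₂RingHom (algebraMap ℂ (RatFunc ℂ)) g)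
    (by
      intro x hx
      simp only [Submonoid.mem_comap, mem_nonZeroDivisors_iff_ne_zero] at *
      intro h
      exact hx (transcendental_iff.1 hg x h))

lemma substHom_apply (g : RatFunc ℂ) (hg : Transcendental ℂ g) (f : RatFunc ℂ) :
    substHom g hg f = subst g f := by
  conv_lhs => rw [← RatFunc.num_div_denom f]
  rw [substHom, RatFunc.liftRingHom_apply_div]
  rfl

lemma subst_X (g : RatFunc ℂ) : subst g RatFunc.X = g := RatFunc.eval_X ..

lemma subst_C (g : RatFunc ℂ) (c : ℂ) : subst g (RatFunc.C c) = RatFunc.C c := by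
  rw [subst, RatFunc.eval_C]; rfl

lemma conjRF_X : conjRF RatFunc.X = RatFunc.X := by
  rw [conjRF, RatFunc.coe_mapRingHom_eq_coe_map, ← RatFunc.algebraMap_X]
  have := RatFunc.map_apply_div (Polynomial.mapRingHom (starRingEnd ℂ)) (by
      intro x hx
      simp only [Submonoid.mem_comap, mem_nonZeroDivisors_iff_ne_zero] at *
      intro h
      exact hx (Polynomial.map_injective _ (starRingEnd ℂ).injective (by simpa using h))) X 1
  simpa using this

lemma conjRF_C (c : ℂ) : conjRF (RatFunc.C c) = RatFunc.C (starRingEnd ℂ c) := by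
  rw [conjRF, RatFunc.coe_mapRingHom_eq_coe_map, ← RatFunc.algebraMap_C]
  have := RatFunc.map_apply_div (Polynomial.mapRingHom (starRingEnd ℂ)) (by
      intro x hx
      simp only [Submonoid.mem_comap, mem_nonZeroDivisors_iff_ne_zero] at *
      intro h
      exact hx (Polynomial.map_injective _ (starRingEnd ℂ).injective (by simpa using h)))
      (Polynomial.C c) 1
  simpa using this

lemma hom_ext_RF (φ ψ : RatFunc ℂ →+* RatFunc ℂ) (hX : φ RatFunc.X = ψ RatFunc.X)
    (hC : ∀ c, φ (RatFunc.C c) = ψ (RatFunc.C c)) : φ = ψ := by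
  have h : φ.comp (algebraMap ℂ[X] (RatFunc ℂ)) = ψ.comp (algebraMap ℂ[X] (RatFunc ℂ)) := by
    apply Polynomial.ringHom_ext
    · intro c; simpa using hC c
    · simpa using hX
  exact IsLocalization.ringHom_ext (nonZeroDivisors ℂ[X]) h

abbrev mob : RatFunc ℂ := (RatFunc.C Complex.I - zz) / (RatFunc.C Complex.I + zz)

lemma RFX_ne_C (c : ℂ) : (RatFunc.X : RatFunc ℂ) ≠ RatFunc.C c := by
  rw [← RatFunc.algebraMap_X, ← RatFunc.algebraMap_C]
  intro h
  exact Polynomial.X_ne_C c (RatFunc.algebraMap_injective ℂ h)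

lemma sum_ne : RatFunc.C Complex.I + zz ≠ 0 := by
  intro h
  apply RFX_ne_C (-Complex.I)
  rw [map_neg]; unfold zz at h; linear_combination h

lemma sub_ne : RatFunc.C Complex.I - zz ≠ 0 := by
  intro h
  apply RFX_ne_C (Complex.I)
  unfold zz at h; linear_combination -h

lemma mob_tr : Transcendental ℂ mob := by
  apply tr_of
  rintro ⟨c, h⟩
  rw [div_eq_iff sum_ne] at h
  -- (c+1) X = I (1 - c)
  by_cases hc : c = -1
  · subst hc
    simp only [map_neg, map_one] at h
    have h2 : RatFunc.C (2 * Complex.I) = RatFunc.C (0 : ℂ) := by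
      rw [map_mul, map_ofNat, map_zero]; linear_combination h
    have := RatFunc.C_injective h2
    simp at this
  · have hc' : c + 1 ≠ 0 := fun h => hc (by linear_combination h)
    apply RFX_ne_C (Complex.I * (1 - c) / (c + 1))
    have hc2 : (RatFunc.C c + 1 : RatFunc ℂ) ≠ 0 := by
      intro h3
      apply hc'
      apply RatFunc.C_injective
      simpa using h3
    simp only [map_div₀, map_mul, map_sub, map_add, map_one]
    rw [eq_div_iff hc2]
    unfold zz at h
    linear_combination -h

lemma inv_tr : Transcendental ℂ (RatFunc.X : RatFunc ℂ)⁻¹ := by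
  apply tr_of
  rintro ⟨c, h⟩
  apply RFX_ne_C c⁻¹
  rw [map_inv₀, ← h, inv_inv]

lemma key (f : RatFunc ℂ) :
    conjRF (subst mob f) = subst mob (subst (RatFunc.X)⁻¹ (conjRF f)) := by
  have : conjRF.comp (substHom mob mob_tr) =
      (substHom mob mob_tr).comp ((substHom _ inv_tr).comp conjRF) := by
    apply hom_ext_RF
    · simp only [RingHom.comp_apply, conjRF_X, substHom_apply, subst_X]
      rw [← substHom_apply _ mob_tr, map_inv₀, substHom_apply, subst_X]
      have h1 := sum_ne
      have h2 := sub_ne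
      have h3 : -RatFunc.C Complex.I + zz ≠ 0 := fun h => h2 (by linear_combination -h)
      simp only [mob, map_div₀, map_sub, map_add, conjRF_C, Complex.conj_I, map_neg, inv_div]
      rw [show conjRF zz = zz from conjRF_X, div_eq_div_iff h3 h2]
      ring
    · intro c
      simp only [RingHom.comp_apply, substHom_apply, subst_C, conjRF_C]
  simpa [substHom_apply] using congrArg (fun φ => φ f) this

/-- `R` is para-skew-Hermitian iff `G(x) := R((i-x)/(i+x))` is skew-Hermitian. -/
theorem paraSkewHermitian_iff_mobius_skewHermitian (m : ℕ)
    (R G : Matrix (Fin m) (Fin m) (RatFunc ℂ))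
    (hG : G = substMat ((RatFunc.C Complex.I - zz) / (RatFunc.C Complex.I + zz)) R) :
    IsParaSkewHermitian R ↔ conjT G = -G := by
  subst hG
  have h1 : conjT (substMat mob R) = substMat mob (paraConj R) := by
    ext i j
    exact key (R j i)
  have h2 : -(substMat mob R) = substMat mob (-R) := by
    ext i j
    simp only [substMat, Matrix.neg_apply, ← substHom_apply _ mob_tr, map_neg]
  change _ ↔ conjT (substMat mob R) = -(substMat mob R)
  rw [h1, h2]
  constructor
  · intro h
    rw [show paraConj R = -R from h]
  · intro h
    change paraConj R = -R
    ext i j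
    have := congrFun (congrFun h i) j
    simp only [substMat, ← substHom_apply _ mob_tr] at this
    exact (substHom _ mob_tr).injective this
end
end
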